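/- Let f : ℝ^d → ℝ^d satisfy f(0) = 0, be Lipschitz continuous with constant C_L > 0, and be strongly monotone with constant ω_f > 0, i.e. ⟨f(x) − f(y), x − y⟩ ≥ ω_f |x − y|² for all x, y ∈ ℝ^d. Let τ > 0, Δt > 0, ε₀ > 0 and ε_s > ε_∞ be real constants, let (Ω, μ) be a measure space, and let W be a finite-dimensional linear subspace of L²(μ; ℝ^d). Then for any P_prev ∈ W and E ∈ L²(μ; ℝ^d) there exists a unique P ∈ W such that τ⟨(P − P_prev)/Δt, Ψ⟩ + ⟨f∘P, Ψ⟩ = ε₀(ε_s − ε_∞)⟨E, Ψ⟩ for every Ψ ∈ W. -/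

import Mathlib

open MeasureTheory
open scoped RealInnerProductSpace

/-!
The discrete equation says that the `W`-projection of `A P = (τ / Δt) • (P - Pprev) + f ∘ P` agrees
with that of a multiple of `E`. Pointwise estimates on `f` integrate, so `A` is Lipschitz and
strongly monotone on `L²`, and both properties survive compression to `W`. For such an operator `A`
on a Hilbert space, `x ↦ x - ρ • (A x - b)` is a contraction for small `ρ > 0`, and its
fixed point solves `A x = b` (Zarantonello).
-/

theorem orthogonalProjectionOnto_eq_iff_forall_inner_eq {𝕜 H : Type*} [RCLike 𝕜]
    [NormedAddCommGroup H] [InnerProductSpace 𝕜 H] (W : Submodule 𝕜 H)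
    [W.HasOrthogonalProjection] {x y : H} :
    W.orthogonalProjectionOnto x = W.orthogonalProjectionOnto y ↔
      ∀ w ∈ W, inner 𝕜 x w = inner 𝕜 y w := by
  rw [← sub_eq_zero, ← map_sub, Submodule.orthogonalProjectionOnto_eq_zero_iff,
    Submodule.mem_orthogonal']
  simp only [inner_sub_left, sub_eq_zero]

/-- The operator `A` on a real inner product space is strongly monotone with constant `m`. The sign
of `m` is not restricted: for `m ≤ 0` this is the one-sided Lipschitz condition on `-A`. -/
def StronglyMonotoneWith {H : Type*} [NormedAddCommGroup H] [InnerProductSpace ℝ H]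
    (m : ℝ) (A : H → H) : Prop :=
  ∀ x y, m * ‖x - y‖ ^ 2 ≤ ⟪A x - A y, x - y⟫

namespace StronglyMonotoneWith

open scoped NNReal

variable {H : Type*} [NormedAddCommGroup H] [InnerProductSpace ℝ H] {A B : H → H} {m n : ℝ}
  {K : ℝ≥0}

theorem smul_sub_const (c : ℝ) (p : H) : StronglyMonotoneWith c fun x => c • (x - p) := by
  intro x y
  rw [← smul_sub, sub_sub_sub_cancel_right, real_inner_smul_left, real_inner_self_eq_norm_sq]

theorem add (hA : StronglyMonotoneWith m A) (hB : StronglyMonotoneWith n B) :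
    StronglyMonotoneWith (m + n) fun x => A x + B x := by
  intro x y
  rw [add_sub_add_comm, inner_add_left, add_mul]
  exact add_le_add (hA x y) (hB x y)

theorem sub_const (hA : StronglyMonotoneWith m A) (b : H) :
    StronglyMonotoneWith m fun x => A x - b := by
  intro x y
  simpa only [sub_sub_sub_cancel_right] using hA x y

theorem orthogonalProjectionOnto_comp (hA : StronglyMonotoneWith m A) (W : Submodule ℝ H)
    [W.HasOrthogonalProjection] :
    StronglyMonotoneWith m fun u : W => W.orthogonalProjectionOnto (A u) := by
  intro u v
  rw [← map_sub, Submodule.inner_orthogonalProjectionOnto_eq_of_mem_right]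
  exact hA u v

theorem injective (hA : StronglyMonotoneWith m A) (hm : 0 < m) : Function.Injective A := by
  intro x y hxy
  have hle : m * ‖x - y‖ ^ 2 ≤ 0 := by simpa only [hxy, sub_self, inner_zero_left] using hA x y
  have hsq : ‖x - y‖ ^ 2 = 0 := le_antisymm (nonpos_of_mul_nonpos_right hle hm) (sq_nonneg _)
  exact sub_eq_zero.1 (norm_eq_zero.1 (pow_eq_zero_iff two_ne_zero |>.1 hsq))

theorem norm_sub_smul_sub_sq_le (hA : StronglyMonotoneWith m A) (hLip : LipschitzWith K A)
    {ρ : ℝ} (hρ : 0 ≤ ρ) (x y : H) :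
    ‖(x - ρ • A x) - (y - ρ • A y)‖ ^ 2 ≤ (1 - 2 * ρ * m + ρ ^ 2 * K ^ 2) * ‖x - y‖ ^ 2 := by
  have hLip_sq : ‖A x - A y‖ ^ 2 ≤ K ^ 2 * ‖x - y‖ ^ 2 := by
    rw [← mul_pow]
    exact pow_le_pow_left₀ (norm_nonneg _) (hLip.norm_sub_le x y) 2
  calc ‖(x - ρ • A x) - (y - ρ • A y)‖ ^ 2
      = ‖(x - y) - ρ • (A x - A y)‖ ^ 2 := by rw [smul_sub, sub_sub_sub_comm]
    _ = ‖x - y‖ ^ 2 - 2 * ρ * ⟪A x - A y, x - y⟫ + ρ ^ 2 * ‖A x - A y‖ ^ 2 := by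
      rw [norm_sub_sq_real, real_inner_smul_right, real_inner_comm, norm_smul, mul_pow,
        Real.norm_of_nonneg hρ, mul_assoc 2 ρ]
    _ ≤ ‖x - y‖ ^ 2 - 2 * ρ * (m * ‖x - y‖ ^ 2) + ρ ^ 2 * (K ^ 2 * ‖x - y‖ ^ 2) := by
      gcongr
      exact hA x y
    _ = (1 - 2 * ρ * m + ρ ^ 2 * K ^ 2) * ‖x - y‖ ^ 2 := by ring

theorem exists_contractingWith_sub_smul (hA : StronglyMonotoneWith m A) (hm : 0 < m)
    (hLip : LipschitzWith K A) :
    ∃ ρ : ℝ, 0 < ρ ∧ ∃ k : ℝ≥0, ContractingWith k fun x => x - ρ • A x := by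
  -- The optimal step is `m / K ^ 2`; the added `1` avoids dividing by zero when `K = 0`.
  obtain ⟨ρ, hρ⟩ : ∃ ρ : ℝ, ρ = m / (K ^ 2 + 1) := ⟨_, rfl⟩
  have hρ_pos : 0 < ρ := by rw [hρ]; positivity
  have hρ_mul : ρ * (K ^ 2 + 1) = m := by rw [hρ]; field_simp
  set q : ℝ := 1 - 2 * ρ * m + ρ ^ 2 * K ^ 2 with hq
  have hq_lt : q < 1 := by
    have hq_eq : q = 1 - ρ * (m + ρ) := by rw [hq]; linear_combination ρ * hρ_mul
    have : 0 < ρ * (m + ρ) := by positivity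
    linarith
  refine ⟨ρ, hρ_pos, ⟨√q, Real.sqrt_nonneg q⟩, ?_, LipschitzWith.of_dist_le_mul fun x y => ?_⟩
  · exact_mod_cast (Real.sqrt_lt' one_pos).2 (by simpa only [one_pow] using hq_lt)
  · rw [dist_eq_norm, dist_eq_norm]
    calc ‖(x - ρ • A x) - (y - ρ • A y)‖
        ≤ √(q * ‖x - y‖ ^ 2) :=
          Real.le_sqrt_of_sq_le (hA.norm_sub_smul_sub_sq_le hLip hρ_pos.le x y)
      _ = √q * ‖x - y‖ := by rw [Real.sqrt_mul' _ (sq_nonneg _), Real.sqrt_sq (norm_nonneg _)]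

theorem surjective [CompleteSpace H] (hA : StronglyMonotoneWith m A) (hm : 0 < m)
    (hLip : LipschitzWith K A) : Function.Surjective A := by
  intro b
  have hLip_sub : LipschitzWith (K + 0) fun x => A x - b := hLip.sub (LipschitzWith.const b)
  obtain ⟨ρ, hρ, k, hk⟩ := (hA.sub_const b).exists_contractingWith_sub_smul hm hLip_sub
  have hfix : hk.fixedPoint - ρ • (A hk.fixedPoint - b) = hk.fixedPoint :=
    hk.fixedPoint_isFixedPt
  rw [sub_eq_self, smul_eq_zero_iff_right hρ.ne', sub_eq_zero] at hfix
  exact ⟨_, hfix⟩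

theorem bijective [CompleteSpace H] (hA : StronglyMonotoneWith m A) (hm : 0 < m)
    (hLip : LipschitzWith K A) : Function.Bijective A :=
  ⟨hA.injective hm, hA.surjective hm hLip⟩

theorem existsUnique_galerkin (hA : StronglyMonotoneWith m A) (hm : 0 < m)
    (hLip : LipschitzWith K A) (W : Submodule ℝ H) [CompleteSpace W] (b : H) :
    ∃! x, x ∈ W ∧ ∀ w ∈ W, ⟪A x, w⟫ = ⟪b, w⟫ := by
  have hLip_proj : LipschitzWith (1 * (K * 1)) fun u : W => W.orthogonalProjectionOnto (A u) :=
    W.lipschitzWith_orthogonalProjectionOnto.comp (hLip.comp (LipschitzWith.subtype_val _))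
  have hbij := (hA.orthogonalProjectionOnto_comp W).bijective hm hLip_proj
  simp only [← orthogonalProjectionOnto_eq_iff_forall_inner_eq]
  obtain ⟨u, hu, hu_unique⟩ := hbij.existsUnique (W.orthogonalProjectionOnto b)
  exact ⟨u, ⟨u.2, hu⟩, fun x hx => congrArg Subtype.val (hu_unique ⟨x, hx.1⟩ hx.2)⟩

end StronglyMonotoneWith

section compLp

open scoped NNReal

variable {Ω V : Type*} [MeasurableSpace Ω] {μ : Measure Ω}
  [NormedAddCommGroup V] {K : ℝ≥0}

theorem inner_compLp_eq_integral {V' : Type*} [NormedAddCommGroup V'] [InnerProductSpace ℝ V']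
    {f : V → V'} (hf : LipschitzWith K f) (hf0 : f 0 = 0) (u : Lp V 2 μ) (v : Lp V' 2 μ) :
    ⟪hf.compLp hf0 u, v⟫ = ∫ x, ⟪f (u x), v x⟫ ∂μ := by
  rw [L2.inner_def]
  refine integral_congr_ae ?_
  filter_upwards [hf.coeFn_compLp hf0 u] with x hx
  rw [hx, Function.comp_apply]

variable [InnerProductSpace ℝ V]

theorem StronglyMonotoneWith.compLp {f : V → V} {m : ℝ} (hmono : StronglyMonotoneWith m f)
    (hf : LipschitzWith K f) (hf0 : f 0 = 0) :
    StronglyMonotoneWith m (hf.compLp hf0 : Lp V 2 μ → Lp V 2 μ) := by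
  intro u v
  rw [← real_inner_self_eq_norm_sq, L2.inner_def, L2.inner_def, ← integral_const_mul]
  refine integral_mono_ae ((L2.integrable_inner _ _).const_mul _) (L2.integrable_inner _ _) ?_
  filter_upwards [hf.coeFn_compLp hf0 u, hf.coeFn_compLp hf0 v, Lp.coeFn_sub u v,
    Lp.coeFn_sub (hf.compLp hf0 u) (hf.compLp hf0 v)] with x hfu hfv hsub hfsub
  simpa only [hsub, hfsub, Pi.sub_apply, hfu, hfv, Function.comp_apply,
    real_inner_self_eq_norm_sq] using hmono (u x) (v x)

theorem stmt_3_general {f : V → V} (hf0 : f 0 = 0) (hLip : LipschitzWith K f)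
    {ωf : ℝ} (hmono : StronglyMonotoneWith ωf f)
    {τ Δt : ℝ} (hΔt : 0 < Δt) (hstep : 0 < τ + ωf * Δt) (κ : ℝ)
    (W : Submodule ℝ (Lp V 2 μ)) [CompleteSpace W] (Pprev E : Lp V 2 μ) :
    ∃! P : Lp V 2 μ, P ∈ W ∧
      ∀ Ψ ∈ W,
        τ * ⟪Δt⁻¹ • (P - Pprev), Ψ⟫ + (∫ x, ⟪f (P x), Ψ x⟫ ∂μ) = κ * ⟪E, Ψ⟫ := by
  set c : ℝ := τ * Δt⁻¹
  have hc : 0 < c + ωf := by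
    have : c + ωf = (τ + ωf * Δt) * Δt⁻¹ := by simp only [c]; field_simp
    rw [this]; positivity
  have hA_mono := (StronglyMonotoneWith.smul_sub_const c Pprev).add (hmono.compLp hLip hf0)
  have hA_lip := ((lipschitzWith_smul c).comp
    (LipschitzWith.id.sub (LipschitzWith.const Pprev))).add (hLip.lipschitzWith_compLp hf0)
  refine (existsUnique_congr fun P => and_congr_right fun _ => forall₂_congr fun Ψ _ => ?_).1
    (hA_mono.existsUnique_galerkin hc hA_lip W (κ • E))
  rw [inner_add_left, inner_compLp_eq_integral, real_inner_smul_left, real_inner_smul_left,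
    real_inner_smul_left, mul_assoc]

end compLp

/-- Theorem 6: unique solvability of the fully discrete Galerkin polarization
equation in a finite-dimensional subspace `W` of `L²(μ; ℝ^d)`. -/
theorem stmt_3 (d : ℕ)
    (f : EuclideanSpace ℝ (Fin d) → EuclideanSpace ℝ (Fin d))
    (hf0 : f 0 = 0)
    (C_L : ℝ) (hCL : 0 < C_L)
    (hLip : ∀ x y : EuclideanSpace ℝ (Fin d), ‖f x - f y‖ ≤ C_L * ‖x - y‖)
    (ωf : ℝ) (hωf : 0 < ωf)
    (hmono : ∀ x y : EuclideanSpace ℝ (Fin d),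
      ωf * ‖x - y‖ ^ 2 ≤ ⟪f x - f y, x - y⟫)
    (τ Δt ε₀ εs εinf : ℝ) (hτ : 0 < τ) (hΔt : 0 < Δt) (hε₀ : 0 < ε₀) (hε : εinf < εs)
    {Ω : Type*} [MeasurableSpace Ω] (μ : Measure Ω)
    (W : Submodule ℝ (Lp (EuclideanSpace ℝ (Fin d)) 2 μ))
    (hW : FiniteDimensional ℝ W)
    (Pprev : Lp (EuclideanSpace ℝ (Fin d)) 2 μ) (hPprev : Pprev ∈ W)
    (E : Lp (EuclideanSpace ℝ (Fin d)) 2 μ) :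
    ∃! P : Lp (EuclideanSpace ℝ (Fin d)) 2 μ, P ∈ W ∧
      ∀ Ψ ∈ W,
        τ * ⟪Δt⁻¹ • (P - Pprev), Ψ⟫ + (∫ x, ⟪f (P x), Ψ x⟫ ∂μ)
          = ε₀ * (εs - εinf) * ⟪E, Ψ⟫ :=
  stmt_3_general hf0 (K := ⟨C_L, hCL.le⟩)
    (LipschitzWith.of_dist_le_mul fun x y => by rw [dist_eq_norm, dist_eq_norm]; exact hLip x y)
    hmono hΔt (by positivity) (ε₀ * (εs - εinf)) W Pprev E
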